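/- arXiv:2602.15941 — 2 statements merged into one kernel-verified Lean document; each statement's English description precedes it below -/
import Mathlib

section
/- Let D₁ and D₂ be arithmetic divisors on Spec ℤ. The additive groups 𝓛(D₁) and 𝓛(D₂) are isomorphic as abstract abelian groups if and only if D₁ and D₂ are linearly equivalent, i.e. there exists a nonzero rational number q such that for every prime p one has D₁(p) = D₂(p) + v_p(q) in ℤ ∪ {∞}. -/
/-!
Multiplication by `q` carries `𝓛(D₂ + div q)` onto `𝓛(D₂)`, which gives one direction.

Conversely, a subgroup of `ℚ` has rank at most one, so every homomorphism between such subgroups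
is multiplication by a rational number (`exists_eq_mul`), and an isomorphism `𝓛(D₁) ≃ 𝓛(D₂)` is
multiplication by some `q ≠ 0`. A divisor can be read off from its sections: since `D` is
negative at only finitely many primes, any `n` with `0 ≤ D p + n` is the `p`-adic valuation of a
nonzero section (`exists_section`). Comparing valuations of sections that correspond to each
other under `x ↦ q * x` forces `D₁ = D₂ + div q`.
-/

/-- An arithmetic divisor on `Spec ℤ`: a function from the rational primes to
`ℤ ∪ {∞}` that is negative at only finitely many primes. -/
def IsArithDivisor (D : Nat.Primes → WithTop ℤ) : Prop :=
  {p : Nat.Primes | D p < 0}.Finite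

/-- The group of sections `𝓛(D) ⊆ ℚ` of an arithmetic divisor `D`. -/
def Ldiv (D : Nat.Primes → WithTop ℤ) : Set ℚ :=
  {x : ℚ | x = 0 ∨ ∀ p : Nat.Primes,
    0 ≤ D p + ((padicValRat (p : ℕ) x : ℤ) : WithTop ℤ)}

/-- The rational number `∏ r ^ e r` has the prescribed valuation `e r` at each prime `r` of the
finite set `S`, and valuation `0` elsewhere. -/
lemma exists_padicValRat_eq (S : Finset Nat.Primes) (e : Nat.Primes → ℤ) :
    ∃ x : ℚ, x ≠ 0 ∧ ∀ r : Nat.Primes,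
      padicValRat (r : ℕ) x = if r ∈ S then e r else 0 := by
  classical
  induction S using Finset.induction_on with
  | empty => exact ⟨1, one_ne_zero, by simp⟩
  | insert a S ha ih =>
    obtain ⟨x, hx, hv⟩ := ih
    have ha0 : ((a : ℕ) : ℚ) ≠ 0 := by exact_mod_cast a.2.ne_zero
    refine ⟨(a : ℕ) ^ e a * x, mul_ne_zero (zpow_ne_zero _ ha0) hx, fun r => ?_⟩
    have : Fact (r : ℕ).Prime := ⟨r.2⟩
    have : Fact (a : ℕ).Prime := ⟨a.2⟩
    rw [padicValRat.mul (zpow_ne_zero _ ha0) hx, padicValRat.zpow, hv]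
    by_cases hra : r = a
    · subst hra
      simp [ha, padicValRat.self r.2.one_lt]
    · have h1 : padicValRat (r : ℕ) ((a : ℕ) : ℚ) = 0 := by
        rw [padicValRat.of_nat, padicValNat_primes (fun h => hra (Subtype.ext h))]
        rfl
      simp [h1, hra]

/-- Each integer `n` allowed by `D` at `p` is the valuation at `p` of a nonzero section. Away from
`p`, only the finitely many primes with `D r < 0` need a nonzero valuation, namely `-D r`. -/
lemma exists_section (D : Nat.Primes → WithTop ℤ) (hD : IsArithDivisor D)
    (p : Nat.Primes) (n : ℤ) (hn : 0 ≤ D p + (n : WithTop ℤ)) :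
    ∃ x : ℚ, x ≠ 0 ∧ x ∈ Ldiv D ∧ padicValRat (p : ℕ) x = n := by
  classical
  obtain ⟨x, hx, hv⟩ := exists_padicValRat_eq (insert p hD.toFinset)
    (fun r => if r = p then n else -(D r).untopD 0)
  refine ⟨x, hx, Or.inr fun r => ?_, by simp [hv]⟩
  rw [hv]
  by_cases hrp : r = p
  · subst hrp
    simpa using hn
  by_cases hr : D r < 0
  · have hmem : r ∈ insert p hD.toFinset :=
      Finset.mem_insert_of_mem ((Set.Finite.mem_toFinset hD).2 hr)
    rw [if_pos hmem, if_neg hrp]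
    cases h : D r with
    | top => simp
    | coe d =>
      rw [WithTop.untopD_coe, ← WithTop.coe_add]
      simp
  · have hmem : r ∉ insert p hD.toFinset := by
      rw [Finset.mem_insert, Set.Finite.mem_toFinset hD]
      exact not_or.2 ⟨hrp, hr⟩
    rw [if_neg hmem]
    simpa using hr

/-- A homomorphism from a subgroup of `ℚ` to `ℚ` is determined by its value at any nonzero `a`,
because every `x` satisfies an integral relation `n * x = m * a` with `n ≠ 0`. -/
lemma exists_eq_mul {H K : AddSubgroup ℚ} (f : H →+ K) (a : H) (ha : (a : ℚ) ≠ 0) (x : H) :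
    (f x : ℚ) = (f a : ℚ) / a * x := by
  set t : ℚ := (x : ℚ) / a with ht
  have hd : (t.den : ℚ) ≠ 0 := by exact_mod_cast t.den_ne_zero
  have hxa : (t.den : ℚ) * x = t.num * a := by
    have h1 : (x : ℚ) = t * a := by rw [ht]; field_simp
    have h2 : (t.den : ℚ) * t = t.num := Rat.den_mul_eq_num t
    rw [h1, ← mul_assoc, h2]
  have hrel : (t.den : ℤ) • x = t.num • a := by
    apply Subtype.ext
    simpa using hxa
  have hf := congrArg (fun y => ((f y : K) : ℚ)) hrel
  simp only [map_zsmul, AddSubgroup.coe_zsmul, zsmul_eq_mul, Int.cast_natCast] at hf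
  apply mul_left_cancel₀ hd
  rw [hf, mul_left_comm, hxa]
  field_simp

lemma mul_mem_Ldiv_iff {D₁ D₂ : Nat.Primes → WithTop ℤ} {q : ℚ} (hq : q ≠ 0)
    (h : ∀ p : Nat.Primes, D₁ p = D₂ p + ((padicValRat (p : ℕ) q : ℤ) : WithTop ℤ)) (x : ℚ) :
    q * x ∈ Ldiv D₂ ↔ x ∈ Ldiv D₁ := by
  by_cases hx : x = 0
  · simp [Ldiv, hx]
  · simp only [Ldiv, Set.mem_ofPred_eq, mul_eq_zero, hq, hx, false_or]
    refine forall_congr' fun p => ?_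
    have : Fact (p : ℕ).Prime := ⟨p.2⟩
    rw [h, padicValRat.mul hq hx, WithTop.coe_add, add_assoc]

/-- An element of `ℤ ∪ {∞}` is determined by the set of integers below it; here `a` is compared with
the translate `b + v`, and `-n` runs over the integers. -/
lemma eq_add_of_nonneg_iff (a b : WithTop ℤ) (v : ℤ)
    (h : ∀ n : ℤ, 0 ≤ a + (n : WithTop ℤ) ↔ 0 ≤ b + ((v + n : ℤ) : WithTop ℤ)) :
    a = b + (v : WithTop ℤ) := by
  cases a with
  | top =>
    cases b with
    | top => simp
    | coe b =>
      have := (h (-v - b - 1)).1 (by simp)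
      rw [← WithTop.coe_add, ← WithTop.coe_zero, WithTop.coe_le_coe] at this
      omega
  | coe a =>
    cases b with
    | top =>
      have := (h (-a - 1)).2 (by simp)
      rw [← WithTop.coe_add, ← WithTop.coe_zero, WithTop.coe_le_coe] at this
      omega
    | coe b =>
      simp only [← WithTop.coe_add, ← WithTop.coe_zero, WithTop.coe_le_coe] at h
      have h1 := h (-a)
      have h2 := h (-v - b)
      rw [← WithTop.coe_add, WithTop.coe_inj]
      omega

/-- `𝓛(D₁)` and `𝓛(D₂)` are isomorphic as abstract abelian groups if and only if
the divisors `D₁` and `D₂` are linearly equivalent: `D₁ = D₂ + div(q)` for some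
nonzero rational `q`. -/
theorem sections_iso_iff_linearly_equivalent
    (D₁ D₂ : Nat.Primes → WithTop ℤ)
    (hD₁ : IsArithDivisor D₁) (hD₂ : IsArithDivisor D₂)
    (H₁ H₂ : AddSubgroup ℚ)
    (hH₁ : (H₁ : Set ℚ) = Ldiv D₁) (hH₂ : (H₂ : Set ℚ) = Ldiv D₂) :
    Nonempty (H₁ ≃+ H₂) ↔
      ∃ q : ℚ, q ≠ 0 ∧ ∀ p : Nat.Primes,
        D₁ p = D₂ p + ((padicValRat (p : ℕ) q : ℤ) : WithTop ℤ) := by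
  have m₁ : ∀ x : ℚ, x ∈ H₁ ↔ x ∈ Ldiv D₁ := fun x => by rw [← hH₁]; rfl
  have m₂ : ∀ x : ℚ, x ∈ H₂ ↔ x ∈ Ldiv D₂ := fun x => by rw [← hH₂]; rfl
  constructor
  · rintro ⟨f⟩
    obtain ⟨a, ha0, ha⟩ : ∃ a : ℚ, a ≠ 0 ∧ a ∈ H₁ := by
      -- some integer `n` satisfies `0 ≤ D₁ 2 + n`, so `exists_section` gives a nonzero section
      obtain ⟨x, hx, hm, -⟩ := exists_section D₁ hD₁ ⟨2, Nat.prime_two⟩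
        (-(D₁ ⟨2, Nat.prime_two⟩).untopD 0) (by
          cases D₁ ⟨2, Nat.prime_two⟩ with
          | top => simp
          | coe d =>
            rw [WithTop.untopD_coe, ← WithTop.coe_add]
            simp)
      exact ⟨x, hx, (m₁ x).2 hm⟩
    have hmul : ∀ x : H₁, (f x : ℚ) = (f ⟨a, ha⟩ : ℚ) / a * x :=
      exists_eq_mul f.toAddMonoidHom ⟨a, ha⟩ ha0
    have hfa : (f ⟨a, ha⟩ : ℚ) ≠ 0 := by
      intro h
      have h0 : f ⟨a, ha⟩ = 0 := Subtype.ext h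
      rw [map_eq_zero_iff f f.injective] at h0
      exact ha0 (congrArg Subtype.val h0)
    set q : ℚ := (f ⟨a, ha⟩ : ℚ) / a with hqdef
    have hq : q ≠ 0 := div_ne_zero hfa ha0
    refine ⟨q, hq, fun p => eq_add_of_nonneg_iff _ _ _ fun n => ?_⟩
    have : Fact (p : ℕ).Prime := ⟨p.2⟩
    constructor
    · intro hn
      obtain ⟨x, hx, hm, hv⟩ := exists_section D₁ hD₁ p n hn
      have hy : q * x ∈ Ldiv D₂ := by
        rw [← m₂, ← hmul ⟨x, (m₁ x).2 hm⟩]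
        exact (f _).2
      have := hy.resolve_left (mul_ne_zero hq hx) p
      rwa [padicValRat.mul hq hx, hv] at this
    · intro hn
      obtain ⟨y, hy, hm, hv⟩ := exists_section D₂ hD₂ p _ hn
      obtain ⟨x, hxy⟩ := f.surjective ⟨y, (m₂ y).2 hm⟩
      have hyx : y = q * x := by rw [← hmul x, hxy]
      have hx : (x : ℚ) ≠ 0 := by
        rintro h
        exact hy (by rw [hyx, h, mul_zero])
      rw [hyx, padicValRat.mul hq hx] at hv
      have := ((m₁ x).1 x.2).resolve_left hx p
      rwa [add_left_cancel hv] at this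
  · rintro ⟨q, hq, h⟩
    have key := mul_mem_Ldiv_iff hq h
    refine ⟨{ toFun := fun x => ⟨q * x, (m₂ _).2 ((key _).2 ((m₁ _).1 x.2))⟩
              invFun := fun y => ⟨q⁻¹ * y, (m₁ _).2 ((key _).1 ?_)⟩
              left_inv := fun x => Subtype.ext (inv_mul_cancel_left₀ hq _)
              right_inv := fun y => Subtype.ext (mul_inv_cancel_left₀ hq _)
              map_add' := fun x y => Subtype.ext (mul_add q _ _) }⟩
    rw [mul_inv_cancel_left₀ hq]
    exact (m₂ _).1 y.2
end

section
/- Let D₁ and D₂ be arithmetic divisors on Spec ℤ, and let D₁ + D₂ be their pointwise sum in ℤ ∪ {∞} (with ∞ absorbing for addition; D₁ + D₂ is again an arithmetic divisor). Then 𝓛(D₁ + D₂) equals the additive subgroup of ℚ generated by the set of products {x·y : x ∈ 𝓛(D₁), y ∈ 𝓛(D₂)}. -/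
/-- The group of sections `𝓛(D)` as an additive subgroup of `ℚ`. -/
def LdivSubgroup (D : Nat.Primes → WithTop ℤ) : AddSubgroup ℚ where
  carrier := Ldiv D
  zero_mem' := Or.inl rfl
  neg_mem' := by
    rintro x (rfl | hx)
    · exact Or.inl neg_zero
    · refine Or.inr fun p => ?_
      rw [padicValRat.neg]
      exact hx p
  add_mem' := by
    rintro x y hx hy
    rcases hx with rfl | hx
    · rwa [zero_add]
    rcases hy with rfl | hy
    · rw [add_zero]; exact Or.inr hx
    by_cases hxy : x + y = 0
    · exact Or.inl hxy
    refine Or.inr fun p => ?_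
    have : Fact (p : ℕ).Prime := ⟨p.2⟩
    have hm := padicValRat.min_le_padicValRat_add (p := (p : ℕ)) hxy
    have h1 := hx p
    have h2 := hy p
    cases hD : D p with
    | top => simp
    | coe d =>
      rw [hD] at h1 h2
      norm_cast at h1 h2 ⊢
      rcases min_le_iff.1 hm with h | h <;> omega

theorem mul_mem_Ldiv {D₁ D₂ : Nat.Primes → WithTop ℤ} {x y : ℚ}
    (hx : x ∈ Ldiv D₁) (hy : y ∈ Ldiv D₂) : x * y ∈ Ldiv (fun p => D₁ p + D₂ p) := by
  by_cases hx0 : x = 0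
  · exact Or.inl (by simp [hx0])
  by_cases hy0 : y = 0
  · exact Or.inl (by simp [hy0])
  refine Or.inr fun p => ?_
  have : Fact (p : ℕ).Prime := ⟨p.2⟩
  have h1 := hx.resolve_left hx0 p
  have h2 := hy.resolve_left hy0 p
  rw [padicValRat.mul hx0 hy0, WithTop.coe_add, add_add_add_comm]
  exact add_nonneg h1 h2

theorem finite_padicValRat_ne_zero {z : ℚ} (hz : z ≠ 0) :
    {p : Nat.Primes | padicValRat (p : ℕ) z ≠ 0}.Finite := by
  have hN : z.num.natAbs * z.den ≠ 0 :=
    mul_ne_zero (Int.natAbs_ne_zero.2 (Rat.num_ne_zero.2 hz)) z.den_nz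
  refine Set.Finite.subset (Set.Finite.preimage (f := fun p : Nat.Primes => (p : ℕ))
    (fun _ _ _ _ h => Subtype.ext h) (z.num.natAbs * z.den).divisors.finite_toSet) ?_
  intro p hp
  simp only [Set.mem_preimage, Finset.mem_coe, Nat.mem_divisors]
  refine ⟨?_, hN⟩
  by_contra hd
  apply hp
  have h1 : ¬ (p : ℕ) ∣ z.num.natAbs := fun h => hd (h.mul_right _)
  have h2 : ¬ (p : ℕ) ∣ z.den := fun h => hd (h.mul_left _)
  simp [padicValRat, padicValInt, padicValNat.eq_zero_of_not_dvd h1,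
    padicValNat.eq_zero_of_not_dvd h2]

theorem padicValRat_prod_primes_zpow (a : Nat.Primes → ℤ) (q : Nat.Primes)
    (S : Finset Nat.Primes) :
    padicValRat (q : ℕ) (∏ p ∈ S, ((p : ℕ) : ℚ) ^ a p) = if q ∈ S then a q else 0 := by
  classical
  have : Fact (q : ℕ).Prime := ⟨q.2⟩
  have hne : ∀ p : Nat.Primes, ((p : ℕ) : ℚ) ≠ 0 := fun p => Nat.cast_ne_zero.2 p.2.ne_zero
  induction S using Finset.induction_on with
  | empty => simp
  | insert p S hp ih =>
    rw [Finset.prod_insert hp, padicValRat.mul (zpow_ne_zero _ (hne p))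
      (Finset.prod_ne_zero_iff.2 fun r _ => zpow_ne_zero _ (hne r)), ih, padicValRat.zpow]
    by_cases hqp : q = p
    · subst hqp
      simp [hp, padicValRat.self q.2.one_lt]
    · have hd : ¬ (q : ℕ) ∣ (p : ℕ) := fun h =>
        hqp (Subtype.ext ((Nat.prime_dvd_prime_iff_eq q.2 p.2).1 h))
      simp [hqp, padicValRat.of_nat, padicValNat.eq_zero_of_not_dvd hd]

/-- Finitely many prescribed nonzero valuations are realised by a rational number. -/
theorem exists_padicValRat_eq_s5 (a : Nat.Primes → ℤ) (ha : {p | a p ≠ 0}.Finite) :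
    ∃ x : ℚ, x ≠ 0 ∧ ∀ p : Nat.Primes, padicValRat (p : ℕ) x = a p := by
  classical
  refine ⟨∏ p ∈ ha.toFinset, ((p : ℕ) : ℚ) ^ a p, Finset.prod_ne_zero_iff.2 fun p _ =>
    zpow_ne_zero _ (Nat.cast_ne_zero.2 p.2.ne_zero), fun q => ?_⟩
  rw [padicValRat_prod_primes_zpow]
  by_cases h : a q = 0 <;> simp [h]

/-- The local choice: a valuation `v` allowed by `d + e` splits as `a + (v - a)`, with the
summands allowed by `d` and `e`; the split is trivial at the unexceptional primes. -/
theorem exists_local_split (d e : WithTop ℤ) (v : ℤ) (h : 0 ≤ d + e + (v : WithTop ℤ)) :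
    ∃ a : ℤ, 0 ≤ d + (a : WithTop ℤ) ∧ 0 ≤ e + ((v - a : ℤ) : WithTop ℤ) ∧
      (v = 0 → 0 ≤ d → 0 ≤ e → a = 0) := by
  by_cases h0 : v = 0 ∧ 0 ≤ d ∧ 0 ≤ e
  · obtain ⟨rfl, hd, he⟩ := h0
    exact ⟨0, by simpa using hd, by simpa using he, fun _ _ _ => rfl⟩
  suffices ∃ a : ℤ, 0 ≤ d + (a : WithTop ℤ) ∧ 0 ≤ e + ((v - a : ℤ) : WithTop ℤ) by
    obtain ⟨a, h1, h2⟩ := this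
    exact ⟨a, h1, h2, fun hv hd he => absurd ⟨hv, hd, he⟩ h0⟩
  cases d with
  | top =>
    cases e with
    | top => exact ⟨0, by simp, by simp⟩
    | coe e => exact ⟨v + e, by simp, by norm_cast; omega⟩
  | coe d =>
    refine ⟨-d, by norm_cast; omega, ?_⟩
    cases e with
    | top => simp
    | coe e =>
      norm_cast at h ⊢
      omega

/-- `𝓛(D₁ + D₂)` equals the additive subgroup of `ℚ` generated by the products
`x·y` with `x ∈ 𝓛(D₁)` and `y ∈ 𝓛(D₂)`, where `D₁ + D₂` is the pointwise sum in
`ℤ ∪ {∞}` (with `∞` absorbing for addition). -/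
theorem sections_of_sum_eq_closure_products
    (D₁ D₂ : Nat.Primes → WithTop ℤ)
    (hD₁ : IsArithDivisor D₁) (hD₂ : IsArithDivisor D₂) :
    Ldiv (fun p => D₁ p + D₂ p) =
      (AddSubgroup.closure
        (Set.image2 (fun x y : ℚ => x * y) (Ldiv D₁) (Ldiv D₂)) : Set ℚ) := by
  apply Set.Subset.antisymm
  · intro z hz
    apply AddSubgroup.subset_closure
    by_cases hz0 : z = 0
    · exact ⟨0, Or.inl rfl, 0, Or.inl rfl, by simp [hz0]⟩
    choose a h1 h2 h3 using fun p => exists_local_split _ _ _ (hz.resolve_left hz0 p)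
    have ha : {p | a p ≠ 0}.Finite := by
      refine ((hD₁.union hD₂).union (finite_padicValRat_ne_zero hz0)).subset fun p hp => ?_
      by_contra hn
      simp only [Set.mem_union, Set.mem_ofPred_eq, not_or, not_lt, not_not] at hn
      exact hp (h3 p hn.2 hn.1.1 hn.1.2)
    obtain ⟨x, hx0, hx⟩ := exists_padicValRat_eq_s5 a ha
    refine ⟨x, Or.inr fun p => ?_, z / x, Or.inr fun p => ?_, mul_div_cancel₀ z hx0⟩
    · rw [hx]
      exact h1 p
    · have : Fact (p : ℕ).Prime := ⟨p.2⟩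
      rw [padicValRat.div hz0 hx0, hx]
      exact h2 p
  · refine (AddSubgroup.closure_le (LdivSubgroup _)).2 ?_
    rintro _ ⟨x, hx, y, hy, rfl⟩
    exact mul_mem_Ldiv hx hy
end
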